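/- arXiv:1912.06412 — 3 statements merged into one kernel-verified Lean document; each statement's English description precedes it below -/
import Mathlib

section
/- Let 0 < q < 1/2, p = 1 - q, and s = 4pq, so 0 < s < 1. Then as z → ∞ (z an integer), I_s(z, 1/2) ~ s^z / √(π (1−s) z); that is, the ratio I_s(z, 1/2) · √(π (1−s) z) / s^z tends to 1 as z → ∞. -/
open scoped BigOperators
open Filter

/-- The Beta function `B(a,b) = ∫_0^1 t^(a-1) (1-t)^(b-1) dt`. -/
noncomputable def Beta (a b : ℝ) : ℝ :=
  ∫ t in (0:ℝ)..1, t ^ (a - 1) * (1 - t) ^ (b - 1)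

/-- The regularized incomplete Beta function
`I_x(a,b) = (1/B(a,b)) ∫_0^x t^(a-1) (1-t)^(b-1) dt`. -/
noncomputable def regBeta (x a b : ℝ) : ℝ :=
  (∫ t in (0:ℝ)..x, t ^ (a - 1) * (1 - t) ^ (b - 1)) / Beta a b

/-!
For fixed `0 < x`, the kernels `t ↦ a t ^ (a - 1) / x ^ a` are probability densities on `(0, x)`
that concentrate at `x` as `a → ∞`. Testing them against `(1 - t) ^ (b - 1)` shows that the
incomplete Beta integral is asymptotic to `(x ^ a / a) (1 - x) ^ (b - 1)` when `x < 1`. For the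
complete integral, Euler's limit formula for `Γ` says that `n ^ b * B(n + 1, b) → Γ(b)` along the
integers, and monotonicity of `B(·, b)` upgrades this to `B(a, b) ~ Γ(b) a ^ (-b)` for real
`a → ∞`. Dividing gives `I_x(a, b) ~ x ^ a / (Γ(b) ((1 - x) a) ^ (1 - b))`; take `b = 1/2`.
-/

section

open MeasureTheory Set Topology

lemma tendsto_mul_const_rpow_atTop_zero {r : ℝ} (hr0 : 0 < r) (hr1 : r < 1) :
    Tendsto (fun a : ℝ => a * r ^ a) atTop (𝓝 0) := by
  refine (tendsto_rpow_mul_exp_neg_mul_atTop_nhds_zero 1 (-Real.log r)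
    (neg_pos.2 (Real.log_neg hr0 hr1))).congr fun a => ?_
  rw [Real.rpow_one, neg_neg, Real.rpow_def_of_pos hr0]

lemma rpow_kernel_nonneg {a x t : ℝ} (ha : 0 ≤ a) (hx : 0 ≤ x) (ht : 0 ≤ t) :
    0 ≤ a / x ^ a * t ^ (a - 1) := by
  positivity

lemma tendstoUniformlyOn_rpow_kernel_zero {r x : ℝ} (hr : 0 < r) (hrx : r < x) :
    TendstoUniformlyOn (fun a t : ℝ => a / x ^ a * t ^ (a - 1)) 0 atTop (Ioc 0 r) := by
  have hx : 0 < x := hr.trans hrx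
  have hbound : Tendsto (fun a : ℝ => a * (r / x) ^ a / r) atTop (𝓝 0) := by
    simpa only [zero_div] using (tendsto_mul_const_rpow_atTop_zero (div_pos hr hx)
      ((div_lt_one hx).2 hrx)).div_const r
  refine Metric.tendstoUniformlyOn_iff.2 fun ε hε => ?_
  filter_upwards [hbound.eventually_lt_const hε, eventually_ge_atTop 1] with a hlt ha t ht
  rw [Pi.zero_apply, dist_zero_left,
    Real.norm_of_nonneg (rpow_kernel_nonneg (by linarith) hx.le ht.1.le)]
  calc a / x ^ a * t ^ (a - 1)
      ≤ a / x ^ a * r ^ (a - 1) := by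
        gcongr
        exacts [ht.1.le, ht.2]
    _ = a * (r / x) ^ a / r := by
        rw [Real.rpow_sub_one hr.ne', Real.div_rpow hr.le hx.le]
        ring
    _ < ε := hlt

lemma integral_rpow_kernel {a x : ℝ} (ha : 0 < a) (hx : 0 < x) :
    ∫ t in Ioo 0 x, a / x ^ a * t ^ (a - 1) = 1 := by
  have hxa : x ^ a ≠ 0 := (Real.rpow_pos_of_pos hx a).ne'
  rw [← integral_Ioc_eq_integral_Ioo, ← intervalIntegral.integral_of_le hx.le,
    intervalIntegral.integral_const_mul, integral_rpow (Or.inl (by linarith)), sub_add_cancel,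
    Real.zero_rpow ha.ne', sub_zero]
  field_simp

theorem tendsto_rpow_kernel_integral_smul {E : Type*} [NormedAddCommGroup E] [NormedSpace ℝ E]
    [CompleteSpace E] {x : ℝ} {f : ℝ → E} {c : E} (hx : 0 < x)
    (hf : IntervalIntegrable f volume 0 x) (hc : Tendsto f (𝓝[<] x) (𝓝 c)) :
    Tendsto (fun a : ℝ => ∫ t in (0:ℝ)..x, (a / x ^ a * t ^ (a - 1)) • f t) atTop (𝓝 c) := by
  simp only [intervalIntegral.integral_of_le hx.le, integral_Ioc_eq_integral_Ioo]
  rw [← nhdsWithin_Ioo_eq_nhdsLT hx] at hc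
  refine tendsto_setIntegral_peak_smul_of_integrableOn_of_tendsto measurableSet_Ioo
    measurableSet_Ioo Subset.rfl self_mem_nhdsWithin measure_Ioo_lt_top.ne ?nonneg ?away ?mass
    (Eventually.of_forall fun a => by fun_prop) (hf.1.mono_set Ioo_subset_Ioc_self) hc
  case nonneg =>
    filter_upwards [eventually_ge_atTop 0] with a ha t ht
    exact rpow_kernel_nonneg ha hx.le ht.1.le
  case away =>
    intro u hu hxu
    obtain ⟨r, hr, hru⟩ := exists_Ioc_subset_of_mem_nhds' (hu.mem_nhds hxu) (half_lt_self hx)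
    refine (tendstoUniformlyOn_rpow_kernel_zero ((half_pos hx).trans_le hr.1) hr.2).mono ?_
    exact fun t ht => ⟨ht.1.1, not_lt.1 fun hrt => ht.2 (hru ⟨hrt, ht.1.2.le⟩)⟩
  case mass =>
    refine tendsto_const_nhds.congr' ?_
    filter_upwards [eventually_gt_atTop 0] with a ha
    exact (integral_rpow_kernel ha hx).symm

lemma tendsto_rpow_mul_of_tendsto_div_one {ι : Type*} {l : Filter ι} {u v G : ι → ℝ} {L : ℝ}
    (c : ℝ) (hu : ∀ᶠ i in l, 0 < u i) (hv : ∀ᶠ i in l, 0 < v i)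
    (hvu : Tendsto (fun i => v i / u i) l (𝓝 1))
    (hG : Tendsto (fun i => v i ^ c * G i) l (𝓝 L)) :
    Tendsto (fun i => u i ^ c * G i) l (𝓝 L) := by
  have hratio : Tendsto (fun i => (v i / u i) ^ c) l (𝓝 1) := by
    simpa only [Real.one_rpow] using hvu.rpow_const (p := c) (Or.inl one_ne_zero)
  have hquot := hG.div hratio one_ne_zero
  rw [div_one] at hquot
  refine hquot.congr' ?_
  filter_upwards [hu, hv] with i hui hvi
  have huc := (Real.rpow_pos_of_pos hui c).ne'
  have hvc := (Real.rpow_pos_of_pos hvi c).ne'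
  rw [Pi.div_apply, Real.div_rpow hvi.le hui.le]
  field_simp

lemma tendsto_rpow_mul_of_antitoneOn_of_natCast {F : ℝ → ℝ} {c L : ℝ} (hF : AntitoneOn F (Ioi 0))
    (h : Tendsto (fun n : ℕ => (n : ℝ) ^ c * F n) atTop (𝓝 L)) :
    Tendsto (fun a : ℝ => a ^ c * F a) atTop (𝓝 L) := by
  have hfloor_pos : ∀ᶠ a : ℝ in atTop, 0 < (⌊a⌋₊ : ℝ) := by
    filter_upwards [eventually_ge_atTop 1] with a ha
    exact Nat.cast_pos.2 (Nat.floor_pos.2 ha)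
  have hceil_pos : ∀ᶠ a : ℝ in atTop, 0 < (⌈a⌉₊ : ℝ) := by
    filter_upwards [eventually_gt_atTop 0] with a ha
    exact Nat.cast_pos.2 (Nat.ceil_pos.2 ha)
  have hlower : Tendsto (fun a : ℝ => a ^ c * F ⌈a⌉₊) atTop (𝓝 L) :=
    tendsto_rpow_mul_of_tendsto_div_one c (eventually_gt_atTop 0) hceil_pos
      tendsto_nat_ceil_div_atTop (h.comp tendsto_nat_ceil_atTop)
  have hupper : Tendsto (fun a : ℝ => a ^ c * F ⌊a⌋₊) atTop (𝓝 L) :=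
    tendsto_rpow_mul_of_tendsto_div_one c (eventually_gt_atTop 0) hfloor_pos
      tendsto_nat_floor_div_atTop (h.comp tendsto_nat_floor_atTop)
  refine tendsto_of_tendsto_of_tendsto_of_le_of_le' hlower hupper ?_ ?_
  · filter_upwards [eventually_gt_atTop 0, hceil_pos] with a ha hceil
    exact mul_le_mul_of_nonneg_left (hF ha hceil (Nat.le_ceil a)) (Real.rpow_nonneg ha.le c)
  · filter_upwards [eventually_gt_atTop 0, hfloor_pos] with a ha hfloor
    exact mul_le_mul_of_nonneg_left (hF hfloor ha (Nat.floor_le ha.le)) (Real.rpow_nonneg ha.le c)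

lemma ofReal_betaIntegrand {a b t : ℝ} (ht : t ∈ Icc (0 : ℝ) 1) :
    ((t ^ (a - 1) * (1 - t) ^ (b - 1) : ℝ) : ℂ) =
      (t : ℂ) ^ ((a : ℂ) - 1) * (1 - (t : ℂ)) ^ ((b : ℂ) - 1) := by
  rw [Complex.ofReal_mul, Complex.ofReal_cpow ht.1, Complex.ofReal_cpow (sub_nonneg.2 ht.2)]
  push_cast
  rfl

lemma ofReal_Beta (a b : ℝ) : (Beta a b : ℂ) = Complex.betaIntegral a b := by
  rw [Beta, Complex.betaIntegral, ← intervalIntegral.integral_ofReal]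
  refine intervalIntegral.integral_congr fun t ht => ofReal_betaIntegrand ?_
  rwa [uIcc_of_le zero_le_one] at ht

lemma intervalIntegrable_betaIntegrand {a b : ℝ} (ha : 0 < a) (hb : 0 < b) :
    IntervalIntegrable (fun t : ℝ => t ^ (a - 1) * (1 - t) ^ (b - 1)) volume 0 1 := by
  have hconv := (Complex.betaIntegral_convergent (u := a) (v := b) (by simpa) (by simpa)).norm
  refine hconv.congr_uIoo fun t ht => ?_
  rw [uIoo_of_le zero_le_one] at ht
  dsimp only
  rw [← ofReal_betaIntegrand ⟨ht.1.le, ht.2.le⟩, Complex.norm_of_nonneg]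
  exact mul_nonneg (Real.rpow_nonneg ht.1.le _) (Real.rpow_nonneg (sub_nonneg.2 ht.2.le) _)

lemma antitoneOn_Beta_left {b : ℝ} (hb : 0 < b) : AntitoneOn (fun a => Beta a b) (Ioi 0) := by
  intro a ha a' ha' haa'
  refine intervalIntegral.integral_mono_on_of_le_Ioo zero_le_one
    (intervalIntegrable_betaIntegrand ha' hb) (intervalIntegrable_betaIntegrand ha hb)
    fun t ht => mul_le_mul_of_nonneg_right ?_ (Real.rpow_nonneg (sub_nonneg.2 ht.2.le) _)
  exact Real.rpow_le_rpow_of_exponent_ge ht.1 ht.2.le (sub_le_sub_right haa' 1)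

lemma tendsto_natCast_rpow_mul_Beta {b : ℝ} (hb : 0 < b) :
    Tendsto (fun n : ℕ => (n : ℝ) ^ b * Beta (n + 1) b) atTop (𝓝 (Real.Gamma b)) := by
  rw [← tendsto_ofReal_iff, ← Complex.Gamma_ofReal]
  refine (Complex.GammaSeq_tendsto_Gamma b).congr fun n => ?_
  rw [Complex.GammaSeq_eq_betaIntegral_of_re_pos (by simpa), Complex.betaIntegral_symm,
    Complex.ofReal_mul, ofReal_Beta, Complex.ofReal_cpow n.cast_nonneg]
  push_cast
  rfl

theorem tendsto_rpow_mul_Beta {b : ℝ} (hb : 0 < b) :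
    Tendsto (fun a : ℝ => a ^ b * Beta a b) atTop (𝓝 (Real.Gamma b)) := by
  refine tendsto_rpow_mul_of_antitoneOn_of_natCast (antitoneOn_Beta_left hb)
    ((tendsto_add_atTop_iff_nat 1).1 ?_)
  push_cast
  exact tendsto_rpow_mul_of_tendsto_div_one b (Eventually.of_forall fun n => by positivity)
    ((eventually_gt_atTop 0).mono fun n hn => Nat.cast_pos.2 hn)
    (tendsto_natCast_div_add_atTop 1) (tendsto_natCast_rpow_mul_Beta hb)

theorem tendsto_incompleteBeta {x : ℝ} (hx0 : 0 < x) (hx1 : x < 1) (b : ℝ) :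
    Tendsto (fun a : ℝ => a / x ^ a * ∫ t in (0:ℝ)..x, t ^ (a - 1) * (1 - t) ^ (b - 1)) atTop
      (𝓝 ((1 - x) ^ (b - 1))) := by
  have hcont : ContinuousOn (fun t : ℝ => (1 - t) ^ (b - 1)) (Iio 1) :=
    (continuousOn_const.sub continuousOn_id).rpow_const fun t ht => Or.inl (sub_pos.2 ht).ne'
  have hint : IntervalIntegrable (fun t : ℝ => (1 - t) ^ (b - 1)) volume 0 x := by
    refine (hcont.mono fun t ht => ?_).intervalIntegrable
    rw [uIcc_of_le hx0.le] at ht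
    exact ht.2.trans_lt hx1
  refine (tendsto_rpow_kernel_integral_smul hx0 hint
    ((hcont.continuousAt (Iio_mem_nhds hx1)).tendsto.mono_left nhdsWithin_le_nhds)).congr
    fun a => ?_
  simp only [smul_eq_mul, mul_assoc, intervalIntegral.integral_const_mul]

theorem regBeta_asymptotics_general {x b : ℝ} (hx0 : 0 < x) (hx1 : x < 1) (hb : 0 < b) :
    Tendsto (fun a : ℝ => regBeta x a b * (Real.Gamma b * ((1 - x) * a) ^ (1 - b)) / x ^ a)
      atTop (𝓝 1) := by
  have hpow : (1 - x) ^ (b - 1) * (1 - x) ^ (1 - b) = 1 := by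
    rw [← Real.rpow_add (sub_pos.2 hx1), sub_add_sub_cancel, sub_self, Real.rpow_zero]
  have hquot := ((tendsto_incompleteBeta hx0 hx1 b).div (tendsto_rpow_mul_Beta hb)
    (Real.Gamma_pos_of_pos hb).ne').mul_const (Real.Gamma b * (1 - x) ^ (1 - b))
  have hone : (1 - x) ^ (b - 1) / Real.Gamma b * (Real.Gamma b * (1 - x) ^ (1 - b)) = 1 := by
    rw [← mul_assoc, div_mul_cancel₀ _ (Real.Gamma_pos_of_pos hb).ne', hpow]
  rw [hone] at hquot
  refine hquot.congr' ?_
  filter_upwards [eventually_gt_atTop 0] with a ha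
  have hab : a ^ b ≠ 0 := (Real.rpow_pos_of_pos ha b).ne'
  rw [Pi.div_apply, regBeta, Real.mul_rpow (sub_pos.2 hx1).le ha.le, Real.rpow_sub ha,
    Real.rpow_one]
  field_simp

lemma four_mul_one_sub_mul_mem_Ioo {q : ℝ} (hq0 : 0 < q) (hq1 : q < 1) (hq : q ≠ 1 / 2) :
    4 * (1 - q) * q ∈ Ioo 0 1 := by
  have hsq : 0 < (1 - 2 * q) ^ 2 := sq_pos_of_ne_zero fun h => hq (by linarith)
  exact ⟨mul_pos (by linarith) hq0, by linarith⟩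

end

/-- asymptotics `I_s(z,1/2) ~ s^z / √(π(1-s)z)` as `z → ∞`. -/
theorem regBeta_asymptotics (q p s : ℝ) (hq0 : 0 < q) (hq2 : q < 1 / 2)
    (hp : p = 1 - q) (hs : s = 4 * p * q) :
    Tendsto (fun z : ℕ =>
        regBeta s (z : ℝ) (1 / 2) * Real.sqrt (Real.pi * (1 - s) * (z : ℝ)) / s ^ z)
      atTop (nhds 1) := by
  obtain ⟨hs0, hs1⟩ : s ∈ Set.Ioo 0 1 := by
    rw [hs, hp]
    exact four_mul_one_sub_mul_mem_Ioo hq0 (by linarith) hq2.ne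
  refine ((regBeta_asymptotics_general hs0 hs1 one_half_pos).comp
    tendsto_natCast_atTop_atTop).congr fun z => ?_
  rw [Function.comp_apply, Real.rpow_natCast, Real.Gamma_one_half_eq, sub_half, ← Real.sqrt_eq_rpow,
    ← Real.sqrt_mul Real.pi_pos.le, mul_assoc Real.pi]
end

section
/- Let 0 < q < 1/2, p = 1 - q, λ = q/p, and let z ≥ 1 and A ≥ z be integers. Define P_A(z) = (I_{4pq}(z, 1/2) − λ^{A+1}) / (1 − λ^{A+1}). Then P_A(z) < P_{A+1}(z), and P_A(z) < I_{4pq}(z, 1/2); that is, the success probability of the A-Nakamoto attack is strictly increasing in the give-up threshold A and is strictly bounded above by the success probability I_{4pq}(z, 1/2) of the non-stopping attack. -/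
open scoped BigOperators
open Filter

/-!
Write `u = λ ^ (A + 1)` and `c = I_{4pq}(z, 1/2)`. Then `P_A(z) = (c - u) / (1 - u)
= 1 - (1 - c) / (1 - u)`, which is strictly decreasing in `u < 1` as soon as `c < 1` and equals `c`
at `u = 0`. Since `0 < λ < 1`, increasing `A` decreases `u` towards `0`. Finally `c < 1` because
`4pq < 1` and the Beta density is positive on `(0, 1)`.
-/

theorem strictMonoOn_integral_of_pos_on {f : ℝ → ℝ} {a b : ℝ}
    (hf : IntervalIntegrable f MeasureTheory.volume a b) (hpos : ∀ t ∈ Set.Ioo a b, 0 < f t) :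
    StrictMonoOn (fun x => ∫ t in a..x, f t) (Set.Icc a b) := by
  intro x hx y hy hxy
  have hint : ∀ {u v}, u ∈ Set.Icc a b → v ∈ Set.Icc a b →
      IntervalIntegrable f MeasureTheory.volume u v :=
    fun hu hv => hf.mono_set (Set.uIcc_subset_uIcc (Set.Icc_subset_uIcc hu)
      (Set.Icc_subset_uIcc hv))
  have ha : a ∈ Set.Icc a b := Set.left_mem_Icc.2 (hx.1.trans hx.2)
  have hgap : 0 < ∫ t in x..y, f t :=
    intervalIntegral.intervalIntegral_pos_of_pos_on (hint hx hy)
      (fun t ht => hpos t (Set.Ioo_subset_Ioo hx.1 hy.2 ht)) hxy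
  rwa [← intervalIntegral.integral_interval_sub_left (hint ha hy) (hint ha hx), sub_pos] at hgap

section IncompleteBeta

variable {a b : ℝ}

theorem intervalIntegrable_rpow_mul_one_sub_rpow (ha : 0 < a) (hb : 0 < b) :
    IntervalIntegrable (fun t : ℝ => t ^ (a - 1) * (1 - t) ^ (b - 1))
      MeasureTheory.volume 0 1 := by
  have hcomplex := Complex.betaIntegral_convergent (u := a) (v := b) (by simpa) (by simpa)
  have hre : IntervalIntegrable (fun t : ℝ =>
      ((t : ℂ) ^ ((a : ℂ) - 1) * (1 - (t : ℂ)) ^ ((b : ℂ) - 1)).re)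
      MeasureTheory.volume 0 1 :=
    ⟨hcomplex.1.re, hcomplex.2.re⟩
  refine hre.congr fun t ht => ?_
  rw [Set.uIoc_of_le zero_le_one] at ht
  norm_cast
  rw [← Complex.ofReal_cpow ht.1.le, ← Complex.ofReal_cpow (sub_nonneg.2 ht.2),
    Complex.re_mul_ofReal, Complex.ofReal_re]

theorem strictMonoOn_integral_rpow_mul_one_sub_rpow (ha : 0 < a) (hb : 0 < b) :
    StrictMonoOn (fun x : ℝ => ∫ t in (0 : ℝ)..x, t ^ (a - 1) * (1 - t) ^ (b - 1))
      (Set.Icc 0 1) :=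
  strictMonoOn_integral_of_pos_on (intervalIntegrable_rpow_mul_one_sub_rpow ha hb) fun _ ht =>
    mul_pos (Real.rpow_pos_of_pos ht.1 _) (Real.rpow_pos_of_pos (sub_pos.2 ht.2) _)

theorem Beta_pos (ha : 0 < a) (hb : 0 < b) : 0 < Beta a b := by
  simpa only [Beta, intervalIntegral.integral_same] using
    strictMonoOn_integral_rpow_mul_one_sub_rpow ha hb
      (Set.left_mem_Icc.2 zero_le_one) (Set.right_mem_Icc.2 zero_le_one) zero_lt_one

theorem regBeta_one (ha : 0 < a) (hb : 0 < b) : regBeta 1 a b = 1 :=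
  div_self (Beta_pos ha hb).ne'

theorem strictMonoOn_regBeta (ha : 0 < a) (hb : 0 < b) :
    StrictMonoOn (fun x => regBeta x a b) (Set.Icc 0 1) := fun _ hx _ hy hxy =>
  div_lt_div_of_pos_right (strictMonoOn_integral_rpow_mul_one_sub_rpow ha hb hx hy hxy)
    (Beta_pos ha hb)

theorem regBeta_lt_one {x : ℝ} (ha : 0 < a) (hb : 0 < b) (hx0 : 0 ≤ x) (hx1 : x < 1) :
    regBeta x a b < 1 :=
  (strictMonoOn_regBeta ha hb ⟨hx0, hx1.le⟩ (Set.right_mem_Icc.2 zero_le_one) hx1).trans_eq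
    (regBeta_one ha hb)

end IncompleteBeta

section OrderedField

variable {K : Type*} [Field K] [LinearOrder K] [IsStrictOrderedRing K] {c d r : K}

theorem strictAntiOn_sub_div_sub (hcd : c < d) :
    StrictAntiOn (fun u => (c - u) / (d - u)) (Set.Iio d) := by
  intro u hu v hv huv
  have hcross : (c - u) * (d - v) - (c - v) * (d - u) = (d - c) * (v - u) := by ring
  rw [div_lt_div_iff₀ (sub_pos.2 hv) (sub_pos.2 hu), ← sub_pos, hcross]
  exact mul_pos (sub_pos.2 hcd) (sub_pos.2 huv)

theorem strictMono_sub_pow_succ_div_one_sub_pow_succ (hc : c < 1) (hr0 : 0 < r) (hr1 : r < 1) :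
    StrictMono fun n : ℕ => (c - r ^ (n + 1)) / (1 - r ^ (n + 1)) := fun m n hmn =>
  strictAntiOn_sub_div_sub hc (pow_lt_one₀ hr0.le hr1 n.succ_ne_zero)
    (pow_lt_one₀ hr0.le hr1 m.succ_ne_zero)
    (pow_lt_pow_right_of_lt_one₀ hr0 hr1 (Nat.succ_lt_succ hmn))

theorem sub_div_one_sub_lt_self {u : K} (hc : c < 1) (hu0 : 0 < u) (hu1 : u < 1) :
    (c - u) / (1 - u) < c := by
  simpa only [sub_zero, div_one] using
    strictAntiOn_sub_div_sub hc (Set.mem_Iio.2 zero_lt_one) (Set.mem_Iio.2 hu1) hu0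

theorem four_mul_one_sub_mul_lt_one {q : K} (hq : q ≠ 1 / 2) : 4 * (1 - q) * q < 1 := by
  have hsq : 0 < (1 - 2 * q) ^ 2 := sq_pos_of_ne_zero fun h => hq (by linarith)
  linarith

end OrderedField

theorem nakamoto_probability_monotone_general {q p lam a b : ℝ} (hq0 : 0 < q) (hq2 : q < 1 / 2)
    (hp : p = 1 - q) (hlam : lam = q / p) (ha : 0 < a) (hb : 0 < b) :
    StrictMono (fun A : ℕ =>
        (regBeta (4 * p * q) a b - lam ^ (A + 1)) / (1 - lam ^ (A + 1)))
      ∧ ∀ A : ℕ, (regBeta (4 * p * q) a b - lam ^ (A + 1)) / (1 - lam ^ (A + 1))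
        < regBeta (4 * p * q) a b := by
  have hp0 : 0 < p := by linarith
  have hlam0 : 0 < lam := hlam ▸ div_pos hq0 hp0
  have hlam1 : lam < 1 := by
    rw [hlam, div_lt_one hp0]
    linarith
  have hx1 : 4 * p * q < 1 := hp ▸ four_mul_one_sub_mul_lt_one hq2.ne
  have hI : regBeta (4 * p * q) a b < 1 := regBeta_lt_one ha hb (by positivity) hx1
  exact ⟨strictMono_sub_pow_succ_div_one_sub_pow_succ hI hlam0 hlam1, fun A =>
    sub_div_one_sub_lt_self hI (pow_pos hlam0 _) (pow_lt_one₀ hlam0.le hlam1 A.succ_ne_zero)⟩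

/-- `P_A(z)` is strictly increasing in `A` and bounded by `I_{4pq}(z,1/2)`. -/
theorem nakamoto_probability_monotone (q p lam : ℝ) (hq0 : 0 < q) (hq2 : q < 1 / 2)
    (hp : p = 1 - q) (hlam : lam = q / p) (z A : ℕ) (hz : 1 ≤ z) (hAz : z ≤ A) :
    (regBeta (4 * p * q) (z : ℝ) (1 / 2) - lam ^ (A + 1)) / (1 - lam ^ (A + 1))
        < (regBeta (4 * p * q) (z : ℝ) (1 / 2) - lam ^ (A + 1 + 1)) / (1 - lam ^ (A + 1 + 1))
      ∧ (regBeta (4 * p * q) (z : ℝ) (1 / 2) - lam ^ (A + 1)) / (1 - lam ^ (A + 1))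
        < regBeta (4 * p * q) (z : ℝ) (1 / 2) := by
  have h := nakamoto_probability_monotone_general hq0 hq2 hp hlam (Nat.cast_pos.2 hz) one_half_pos
  exact ⟨h.1 A.lt_succ_self, h.2 A⟩
end

section
/- Let z ≥ 1 be a fixed integer. Then, with p = 1 − q, I_{4pq}(z, 1/2) ~ 2 C(2z−1, z) q^z as q → 0⁺; that is, the limit as q → 0⁺ of I_{4pq}(z, 1/2) / q^z equals 2 C(2z−1, z), where C(n,k) denotes the binomial coefficient. -/
open scoped BigOperators
open Filter

/-!
Near `0` the integrand of the incomplete Beta function is `t ^ (a - 1) * (1 + o(1))`, so L'Hôpital's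
rule gives `I_x(a, b) ~ x ^ a / (a * B(a, b))`, and `x = 4 * (1 - q) * q` contributes the factor
`4 ^ a`. For `b = 1 / 2` Legendre's duplication formula turns `4 ^ a / (a * B(a, 1 / 2))` into
`2 * Γ(2 * a) / (Γ(a + 1) * Γ(a))`, which is `2 * C(2 * z - 1, z)` at `a = z`.
-/

open Set Topology

theorem Beta_eq_Gamma_mul_div {a b : ℝ} (ha : 0 < a) (hb : 0 < b) :
    Beta a b = Real.Gamma a * Real.Gamma b / Real.Gamma (a + b) := by
  have integrand_eq : EqOn
      (fun x : ℝ => (x : ℂ) ^ ((a : ℂ) - 1) * (1 - (x : ℂ)) ^ ((b : ℂ) - 1))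
      (fun x : ℝ => ((x ^ (a - 1) * (1 - x) ^ (b - 1) : ℝ) : ℂ)) (uIcc 0 1) := by
    intro x hx
    rw [uIcc_of_le zero_le_one] at hx
    simp only [Complex.ofReal_mul, Complex.ofReal_cpow hx.1,
      Complex.ofReal_cpow (sub_nonneg.2 hx.2), Complex.ofReal_sub, Complex.ofReal_one]
  rw [← ProbabilityTheory.beta, ProbabilityTheory.beta_eq_betaIntegralReal a b ha hb,
    Complex.betaIntegral, intervalIntegral.integral_congr integrand_eq,
    intervalIntegral.integral_ofReal, Complex.ofReal_re, Beta]

theorem Beta_one_half {a : ℝ} (ha : 0 < a) :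
    Beta a (1 / 2) = 4 ^ a * Real.Gamma a ^ 2 / (2 * Real.Gamma (2 * a)) := by
  have hΓ : Real.Gamma (a + 1 / 2) ≠ 0 := (Real.Gamma_pos_of_pos (by positivity)).ne'
  have hΓ₂ : Real.Gamma (2 * a) ≠ 0 := (Real.Gamma_pos_of_pos (by positivity)).ne'
  have duplication : Real.Gamma a * Real.Gamma (a + 1 / 2) * 4 ^ a =
      2 * Real.Gamma (2 * a) * √Real.pi := by
    have two_rpow : (2 : ℝ) ^ (1 - 2 * a) * 4 ^ a = 2 := by
      rw [show (4 : ℝ) = 2 ^ (2 : ℝ) by norm_num, ← Real.rpow_mul zero_le_two,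
        ← Real.rpow_add two_pos, sub_add_cancel, Real.rpow_one]
    rw [Real.Gamma_mul_Gamma_add_half]
    linear_combination Real.Gamma (2 * a) * √Real.pi * two_rpow
  rw [Beta_eq_Gamma_mul_div ha one_half_pos, Real.Gamma_one_half_eq,
    div_eq_div_iff hΓ (mul_ne_zero two_ne_zero hΓ₂)]
  linear_combination -Real.Gamma a * duplication

theorem four_rpow_div_mul_Beta_one_half {a : ℝ} (ha : 0 < a) :
    4 ^ a / (a * Beta a (1 / 2)) =
      2 * (Real.Gamma (2 * a) / (Real.Gamma (a + 1) * Real.Gamma a)) := by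
  have hΓ : Real.Gamma a ≠ 0 := (Real.Gamma_pos_of_pos ha).ne'
  rw [Beta_one_half ha, Real.Gamma_add_one ha.ne']
  field_simp

theorem intervalIntegrable_rpow_mul {a δ x : ℝ} (ha : 0 < a) {g : ℝ → ℝ}
    (hg : ContinuousOn g (Ico 0 δ)) (hx : x ∈ Ioo 0 δ) :
    IntervalIntegrable (fun t => t ^ (a - 1) * g t) MeasureTheory.volume 0 x := by
  refine (intervalIntegral.intervalIntegrable_rpow' (by linarith)).mul_continuousOn (hg.mono ?_)
  rw [uIcc_of_le hx.1.le]
  exact Icc_subset_Ico_right hx.2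

theorem hasDerivAt_integral_rpow_mul {a δ x : ℝ} (ha : 0 < a) {g : ℝ → ℝ}
    (hg : ContinuousOn g (Ico 0 δ)) (hx : x ∈ Ioo 0 δ) :
    HasDerivAt (fun u => ∫ t in (0 : ℝ)..u, t ^ (a - 1) * g t) (x ^ (a - 1) * g x) x := by
  have continuousOn : ContinuousOn (fun t => t ^ (a - 1) * g t) (Ioo 0 δ) :=
    (continuousOn_id.rpow_const fun t ht => .inl ht.1.ne').mul (hg.mono Ioo_subset_Ico_self)
  exact intervalIntegral.integral_hasDerivAt_right (intervalIntegrable_rpow_mul ha hg hx)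
    (continuousOn.stronglyMeasurableAtFilter isOpen_Ioo x hx)
    (continuousOn.continuousAt (isOpen_Ioo.mem_nhds hx))

theorem tendsto_intervalIntegral_nhdsGT {f : ℝ → ℝ} {c d : ℝ} (hcd : c < d)
    (hf : IntervalIntegrable f MeasureTheory.volume c d) :
    Tendsto (fun x => ∫ t in c..x, f t) (𝓝[>] c) (𝓝 0) := by
  have continuousWithinAt : ContinuousWithinAt (fun x => ∫ t in c..x, f t) (Icc c d) c := by
    rw [← uIcc_of_le hcd.le]
    exact intervalIntegral.continuousOn_primitive_interval' hf left_mem_uIcc c left_mem_uIcc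
  simpa only [intervalIntegral.integral_same] using
    continuousWithinAt.tendsto.mono_left (nhdsWithin_le_of_mem (Icc_mem_nhdsGT hcd))

theorem tendsto_integral_rpow_mul_div_rpow {a δ : ℝ} (ha : 0 < a) (hδ : 0 < δ) {g : ℝ → ℝ}
    (hg : ContinuousOn g (Ico 0 δ)) :
    Tendsto (fun x => (∫ t in (0 : ℝ)..x, t ^ (a - 1) * g t) / x ^ a) (𝓝[>] 0) (𝓝 (g 0 / a)) := by
  have tendsto_integral :
      Tendsto (fun x => ∫ t in (0 : ℝ)..x, t ^ (a - 1) * g t) (𝓝[>] 0) (𝓝 0) :=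
    tendsto_intervalIntegral_nhdsGT (half_pos hδ)
      (intervalIntegrable_rpow_mul ha hg ⟨half_pos hδ, half_lt_self hδ⟩)
  have tendsto_g : Tendsto g (𝓝[>] 0) (𝓝 (g 0)) :=
    (hg 0 ⟨le_rfl, hδ⟩).tendsto.mono_left
      (nhdsWithin_le_of_mem (mem_of_superset (Ioo_mem_nhdsGT hδ) Ioo_subset_Ico_self))
  have tendsto_rpow : Tendsto (fun x : ℝ => x ^ a) (𝓝[>] 0) (𝓝 0) := by
    simpa only [Real.zero_rpow ha.ne'] using
      (Real.continuousAt_rpow_const 0 a (.inr ha.le)).tendsto.mono_left nhdsWithin_le_nhds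
  refine HasDerivAt.lhopital_zero_nhdsGT (f' := fun x => x ^ (a - 1) * g x)
    (g' := fun x => a * x ^ (a - 1)) ?_ ?_ ?_ tendsto_integral tendsto_rpow ?_
  · filter_upwards [Ioo_mem_nhdsGT hδ] with x hx using hasDerivAt_integral_rpow_mul ha hg hx
  · filter_upwards [self_mem_nhdsWithin] with x (hx : 0 < x) using
      Real.hasDerivAt_rpow_const (.inl hx.ne')
  · filter_upwards [self_mem_nhdsWithin] with x (hx : 0 < x) using by positivity
  · refine (tendsto_g.div_const a).congr' ?_
    filter_upwards [self_mem_nhdsWithin] with x (hx : 0 < x)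
    rw [mul_comm a, mul_div_mul_left _ _ (Real.rpow_pos_of_pos hx _).ne']

theorem tendsto_regBeta_div_rpow {a : ℝ} (ha : 0 < a) (b : ℝ) :
    Tendsto (fun x => regBeta x a b / x ^ a) (𝓝[>] 0) (𝓝 (1 / (a * Beta a b))) := by
  have continuousOn : ContinuousOn (fun t : ℝ => (1 - t) ^ (b - 1)) (Ico 0 1) :=
    (continuousOn_const.sub continuousOn_id).rpow_const fun t ht => .inl (sub_pos.2 ht.2).ne'
  have tendsto_div := (tendsto_integral_rpow_mul_div_rpow ha one_pos continuousOn).div_const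
    (Beta a b)
  simpa only [regBeta, div_right_comm, sub_zero, Real.one_rpow, div_div] using tendsto_div

theorem tendsto_regBeta_four_mul_div_rpow {a : ℝ} (ha : 0 < a) (b : ℝ) :
    Tendsto (fun q => regBeta (4 * (1 - q) * q) a b / q ^ a) (𝓝[>] 0)
      (𝓝 (4 ^ a / (a * Beta a b))) := by
  have tendsto_four : Tendsto (fun q : ℝ => 4 * (1 - q)) (𝓝[>] 0) (𝓝 4) :=
    (Continuous.tendsto' (by fun_prop) 0 4 (by norm_num)).mono_left nhdsWithin_le_nhds
  have factor_pos : ∀ᶠ q : ℝ in 𝓝[>] 0, 0 < 4 * (1 - q) :=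
    tendsto_four.eventually_const_lt four_pos
  have tendsto_arg : Tendsto (fun q : ℝ => 4 * (1 - q) * q) (𝓝[>] 0) (𝓝[>] 0) := by
    refine tendsto_nhdsWithin_iff.2 ⟨?_, ?_⟩
    · exact (Continuous.tendsto' (by fun_prop) 0 0 (by norm_num)).mono_left nhdsWithin_le_nhds
    · filter_upwards [factor_pos, self_mem_nhdsWithin] with q hq₄ hq using mul_pos hq₄ hq
  have tendsto_mul := ((tendsto_regBeta_div_rpow ha b).comp tendsto_arg).mul
    (tendsto_four.rpow_const (.inr ha.le))
  rw [one_div_mul_eq_div] at tendsto_mul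
  refine tendsto_mul.congr' ?_
  filter_upwards [factor_pos, self_mem_nhdsWithin] with q hq₄ (hq : 0 < q)
  have hq₄a : (4 * (1 - q)) ^ a ≠ 0 := (Real.rpow_pos_of_pos hq₄ a).ne'
  rw [Function.comp_apply, Real.mul_rpow hq₄.le hq.le]
  field_simp

theorem cast_choose_eq_Gamma_div {n k : ℕ} (hk : k ≤ n) :
    (n.choose k : ℝ) =
      Real.Gamma (n + 1) / (Real.Gamma (k + 1) * Real.Gamma (n - k + 1)) := by
  rw [Nat.cast_choose ℝ hk, ← Nat.cast_sub hk]
  simp only [Real.Gamma_nat_eq_factorial]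

theorem cast_choose_two_mul_sub_one_eq_Gamma_div {z : ℕ} (hz : 1 ≤ z) :
    ((2 * z - 1).choose z : ℝ) =
      Real.Gamma (2 * z) / (Real.Gamma (z + 1) * Real.Gamma z) := by
  rw [cast_choose_eq_Gamma_div (by lia), Nat.cast_sub (by lia)]
  push_cast
  rw [sub_add_cancel, show (2 * z - 1 - z + 1 : ℝ) = z by ring]

theorem regBeta_asymptotics_small_q_general {a : ℝ} (ha : 0 < a) :
    Tendsto (fun q : ℝ => regBeta (4 * (1 - q) * q) a (1 / 2) / q ^ a) (𝓝[>] 0)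
      (𝓝 (2 * (Real.Gamma (2 * a) / (Real.Gamma (a + 1) * Real.Gamma a)))) :=
  four_rpow_div_mul_Beta_one_half ha ▸ tendsto_regBeta_four_mul_div_rpow ha (1 / 2)

/-- `I_{4pq}(z,1/2) ~ 2 C(2z-1,z) q^z` as `q → 0⁺`, with `p = 1 - q`. -/
theorem regBeta_asymptotics_small_q (z : ℕ) (hz : 1 ≤ z) :
    Tendsto (fun q : ℝ => regBeta (4 * (1 - q) * q) (z : ℝ) (1 / 2) / q ^ z)
      (nhdsWithin 0 (Set.Ioi 0)) (nhds (2 * ((2 * z - 1).choose z : ℝ))) := by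
  rw [cast_choose_two_mul_sub_one_eq_Gamma_div hz]
  simpa only [Real.rpow_natCast] using
    regBeta_asymptotics_small_q_general (a := z) (Nat.cast_pos.2 hz)
end
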